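/- Let d be a positive integer, ε ∈ (0,1), and set n = ⌈2575.5·d·(1+ε)/ε²⌉, η = 1/14, and x = log 2 + 10^{−10}. Then (1/n)·( 1015·(1+η)·d·(1 + √(1 + 2n/(1015d))) + 2√(nx) + (2.5 + 32/η)·x ) ≤ ε. -/

import Mathlib

/-!
Write `T(d, n, x)` for the large-deviation threshold and `m = 2575.5 (1 + ε) / ε²`, so that the
sample size is at least `d m`. Since `n` enters `T` only through square roots, `T(d, n, x) / n`
decreases in `n`, so one may take `n = d m`. Passing from `(1, m)` to `(d, d m)` multiplies the
first term of `T` by `d` and the other two by at most `d`, which leaves `T(1, m, x) ≤ ε m`.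
There the two square roots, multiplied by `ε`, are bounded by affine functions of `ε` that are
nearly tangent at `ε = 1`. That end is the critical one: for `x = log 2` the inequality there reads
`5150.57 ≤ 5151`.
-/

/-- The threshold of the large-deviation bound `Pr(Z ≥ deviationThreshold η d n x) ≤ 2e^{-x}`, where
`Z / n` is the discrepancy of `n` random points in dimension `d`. The parameters `d` and `n` are
real so that they can be rescaled. -/
noncomputable def deviationThreshold (η d n x : ℝ) : ℝ :=
  1015 * (1 + η) * d * (1 + √(1 + 2 * n / (1015 * d))) + 2 * √(n * x) + (2.5 + 32 / η) * x

/-- The number of points per dimension, before rounding, that guarantees discrepancy at most `ε`. -/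
noncomputable def pointsPerDimension (ε : ℝ) : ℝ :=
  2575.5 * (1 + ε) / ε ^ 2

theorem pointsPerDimension_pos {ε : ℝ} (hε : 0 < ε) : 0 < pointsPerDimension ε := by
  unfold pointsPerDimension
  positivity

theorem sqrt_mul_le_mul_sqrt {k : ℝ} (hk : 1 ≤ k) (y : ℝ) : √(k * y) ≤ k * √y := by
  rw [Real.sqrt_mul (by positivity)]
  gcongr
  exact Real.sqrt_le_self_iff.2 (.inr hk)

section Scaling

variable {η k x : ℝ}

theorem deviationThreshold_mul_mul_le (hη : 0 < η) (hx : 0 ≤ x) (hk : 1 ≤ k) (d n : ℝ) :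
    deviationThreshold η (k * d) (k * n) x ≤ k * deviationThreshold η d n x := by
  have h_ratio : 2 * (k * n) / (1015 * (k * d)) = 2 * n / (1015 * d) := by
    rw [mul_left_comm 2, mul_left_comm 1015, mul_div_mul_left _ _ (by positivity)]
  have h_sqrt : √(k * n * x) ≤ k * √(n * x) := by
    simpa only [mul_assoc] using sqrt_mul_le_mul_sqrt hk (n * x)
  have h_const : (2.5 + 32 / η) * x ≤ k * ((2.5 + 32 / η) * x) :=
    le_mul_of_one_le_left (by positivity) hk
  unfold deviationThreshold
  rw [h_ratio]
  linarith

theorem deviationThreshold_mul_le {d : ℝ} (hη : 0 < η) (hd : 0 ≤ d) (hx : 0 ≤ x) (hk : 1 ≤ k)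
    (n : ℝ) :
    deviationThreshold η d (k * n) x ≤ k * deviationThreshold η d n x := by
  have h_sqrt_ratio : √(1 + 2 * (k * n) / (1015 * d)) ≤ k * √(1 + 2 * n / (1015 * d)) :=
    calc √(1 + 2 * (k * n) / (1015 * d))
        ≤ √(k * (1 + 2 * n / (1015 * d))) := by
          rw [mul_add, mul_one, mul_left_comm 2, mul_div_assoc]
          gcongr
      _ ≤ k * √(1 + 2 * n / (1015 * d)) := sqrt_mul_le_mul_sqrt hk _
  have h_const : (2.5 + 32 / η) * x ≤ k * ((2.5 + 32 / η) * x) :=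
    le_mul_of_one_le_left (by positivity) hk
  calc deviationThreshold η d (k * n) x
      ≤ 1015 * (1 + η) * d * (k + k * √(1 + 2 * n / (1015 * d)))
          + 2 * (k * √(n * x)) + k * ((2.5 + 32 / η) * x) := by
        unfold deviationThreshold
        gcongr
        simpa only [mul_assoc] using sqrt_mul_le_mul_sqrt hk (n * x)
    _ = k * deviationThreshold η d n x := by
        unfold deviationThreshold
        ring

theorem antitoneOn_deviationThreshold_div {d : ℝ} (hη : 0 < η) (hd : 0 ≤ d) (hx : 0 ≤ x) :
    AntitoneOn (fun n ↦ deviationThreshold η d n x / n) (Set.Ioi 0) := by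
  intro m (hm : 0 < m) n (hn : 0 < n) hmn
  have hk : 1 ≤ n / m := (one_le_div₀ hm).2 hmn
  calc deviationThreshold η d n x / n
      = deviationThreshold η d (n / m * m) x / n := by rw [div_mul_cancel₀ n hm.ne']
    _ ≤ n / m * deviationThreshold η d m x / n := by
        gcongr
        exact deviationThreshold_mul_le hη hd hx hk m
    _ = deviationThreshold η d m x / m := by field_simp

end Scaling

section OneDimensional

variable {ε x : ℝ}

theorem sqrt_one_add_two_mul_pointsPerDimension_div_le (hε : 0 < ε) (hε₁ : ε ≤ 1) :
    √(1 + 2 * pointsPerDimension ε / 1015) ≤ (2.28 + 1.0592 * ε) / ε := by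
  have h_affine : ε ^ 2 + 5151 / 1015 * (1 + ε) ≤ (2.28 + 1.0592 * ε) ^ 2 := by
    nlinarith [sq_nonneg (ε - 1)]
  refine Real.sqrt_le_iff.2 ⟨by positivity, ?_⟩
  calc 1 + 2 * pointsPerDimension ε / 1015
      = (ε ^ 2 + 5151 / 1015 * (1 + ε)) / ε ^ 2 := by
        unfold pointsPerDimension
        field_simp
        ring
    _ ≤ (2.28 + 1.0592 * ε) ^ 2 / ε ^ 2 := by gcongr
    _ = ((2.28 + 1.0592 * ε) / ε) ^ 2 := (div_pow _ _ _).symm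

theorem sqrt_pointsPerDimension_mul_le (hε : 0 < ε) (hx : x ≤ 0.6932) :
    √(pointsPerDimension ε * x) ≤ 14.95 * (3 + ε) / ε := by
  -- AM-GM for `1 + ε` and `2`, with equality at the critical end `ε = 1`.
  have h_amgm : 8 * (1 + ε) ≤ (3 + ε) ^ 2 := by linarith [sq_nonneg (ε - 1)]
  refine Real.sqrt_le_iff.2 ⟨by positivity, ?_⟩
  calc pointsPerDimension ε * x
      ≤ pointsPerDimension ε * 0.6932 := by
        gcongr
        exact (pointsPerDimension_pos hε).le
    _ = 2575.5 * 0.6932 * (1 + ε) / ε ^ 2 := by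
        unfold pointsPerDimension
        ring
    _ ≤ (14.95 * (3 + ε)) ^ 2 / ε ^ 2 := by
        gcongr
        linarith
    _ = (14.95 * (3 + ε) / ε) ^ 2 := (div_pow _ _ _).symm

theorem deviationThreshold_one_pointsPerDimension_le (hε : 0 < ε) (hε₁ : ε ≤ 1)
    (hx : x ≤ 0.6932) :
    deviationThreshold (1 / 14) 1 (pointsPerDimension ε) x ≤ ε * pointsPerDimension ε := by
  have h_affine : 1087.5 * (ε + (2.28 + 1.0592 * ε)) + 2 * (14.95 * (3 + ε)) + 450.5 * 0.6932 * ε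
      ≤ 2575.5 * (1 + ε) := by
    linarith
  calc deviationThreshold (1 / 14) 1 (pointsPerDimension ε) x
      = 1087.5 * (1 + √(1 + 2 * pointsPerDimension ε / 1015))
          + 2 * √(pointsPerDimension ε * x) + 450.5 * x := by
        unfold deviationThreshold
        norm_num
    _ ≤ 1087.5 * (1 + (2.28 + 1.0592 * ε) / ε) + 2 * (14.95 * (3 + ε) / ε) + 450.5 * 0.6932 := by
        gcongr
        · exact sqrt_one_add_two_mul_pointsPerDimension_div_le hε hε₁
        · exact sqrt_pointsPerDimension_mul_le hε hx
    _ = (1087.5 * (ε + (2.28 + 1.0592 * ε)) + 2 * (14.95 * (3 + ε)) + 450.5 * 0.6932 * ε) / ε := by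
        field_simp
    _ ≤ 2575.5 * (1 + ε) / ε := by gcongr
    _ = ε * pointsPerDimension ε := by
        unfold pointsPerDimension
        field_simp

end OneDimensional

theorem discrepancy_numerics_general {d ε n x : ℝ} (hd : 1 ≤ d) (hε : 0 < ε) (hε₁ : ε ≤ 1)
    (hn : 2575.5 * d * (1 + ε) / ε ^ 2 ≤ n) (hx : 0 ≤ x) (hx₁ : x ≤ 0.6932) :
    deviationThreshold (1 / 14) d n x / n ≤ ε := by
  set m := pointsPerDimension ε with hm_def
  have hm : 0 < m := pointsPerDimension_pos hε
  have hd₀ : 0 < d := by positivity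
  have hmn : d * m ≤ n := by
    convert hn using 1
    rw [hm_def, pointsPerDimension]
    ring
  have hdm : 0 < d * m := by positivity
  calc deviationThreshold (1 / 14) d n x / n
      ≤ deviationThreshold (1 / 14) d (d * m) x / (d * m) :=
        antitoneOn_deviationThreshold_div (by norm_num) hd₀.le hx hdm (hdm.trans_le hmn) hmn
    _ ≤ d * deviationThreshold (1 / 14) 1 m x / (d * m) := by
        gcongr
        simpa only [mul_one] using deviationThreshold_mul_mul_le (by norm_num) hx hd 1 m
    _ = deviationThreshold (1 / 14) 1 m x / m := mul_div_mul_left _ _ hd₀.ne'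
    _ ≤ ε := (div_le_iff₀ hm).2 (deviationThreshold_one_pointsPerDimension_le hε hε₁ hx₁)

theorem discrepancy_numerics (d : ℕ) (hd : 0 < d) (ε : ℝ) (hε : ε ∈ Set.Ioo (0 : ℝ) 1)
    (n : ℕ) (hn : n = ⌈(2575.5 * d * (1 + ε) / ε ^ 2 : ℝ)⌉₊)
    (η x : ℝ) (hη : η = 1 / 14) (hx : x = Real.log 2 + 1e-10) :
    (1 / n : ℝ) * (1015 * (1 + η) * d * (1 + Real.sqrt (1 + 2 * n / (1015 * d)))
      + 2 * Real.sqrt (n * x) + (2.5 + 32 / η) * x) ≤ ε := by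
  have hx₀ : 0 ≤ x := by rw [hx]; positivity
  have hx₁ : x ≤ 0.6932 := by linarith [Real.log_two_lt_d9]
  rw [one_div_mul_eq_div, hη]
  exact discrepancy_numerics_general (mod_cast hd) hε.1 hε.2.le (hn ▸ Nat.le_ceil _) hx₀ hx₁
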